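/- If a left-c.e. real α is weakly left-c.e. speedable, then α is left-c.e. speedable; more precisely, if there are a rational ρ ∈ (0,1) and two left-c.e. approximations {a_s} and {b_s} of α with liminf_{s→∞} |(α − b_s)/(α − a_s)| ≤ ρ, then α has a left-c.e. approximation that is ρ-speedable. -/

import Mathlib

open Filter

/-- A computable approximation of a real `α`: a computable sequence of
rationals in `[0,1]` converging to `α`. -/
def IsCompApprox (a : ℕ → ℚ) (α : ℝ) : Prop :=
  Computable a ∧ (∀ s, a s ∈ Set.Icc (0 : ℚ) 1) ∧
    Tendsto (fun s => (a s : ℝ)) atTop (nhds α)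

/-- A d.c.e. approximation: a computable approximation with bounded variation. -/
def IsDCEApprox (a : ℕ → ℚ) (α : ℝ) : Prop :=
  IsCompApprox a α ∧ Summable (fun s => |(a (s + 1) : ℝ) - (a s : ℝ)|)

/-- A computable order: a nondecreasing unbounded computable function. -/
def IsComputableOrder (f : ℕ → ℕ) : Prop :=
  Computable f ∧ Monotone f ∧ Tendsto f atTop atTop

/-- The liminf (in the extended reals) of `|(α - a (f s)) / (α - a s)|`. -/
noncomputable def speedLiminf (a : ℕ → ℚ) (f : ℕ → ℕ) (α : ℝ) : EReal :=
  Filter.liminf (fun s => ((|(α - (a (f s) : ℝ)) / (α - (a s : ℝ))| : ℝ) : EReal)) atTop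

/-- A computable approximation `a` of `α` is `ρ`-speedable. -/
def IsRhoSpeedable (a : ℕ → ℚ) (α : ℝ) (ρ : ℚ) : Prop :=
  (∃ q : ℚ, α = (q : ℝ)) ∨
    ∃ f, IsComputableOrder f ∧ speedLiminf a f α ≤ (((ρ : ℝ) : EReal))

/-- A computable approximation is speedable if it is `ρ`-speedable for some rational
`ρ ∈ [0,1)`. -/
def IsSpeedable (a : ℕ → ℚ) (α : ℝ) : Prop :=
  ∃ ρ : ℚ, 0 ≤ ρ ∧ ρ < 1 ∧ IsRhoSpeedable a α ρ

/-- A Solovay test: computable sequences of rationals `l i ≤ r i` in `[0,1]`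
with `Σ (r i - l i) < ∞`. -/
structure SolovayTest where
  l : ℕ → ℚ
  r : ℕ → ℚ
  comp_l : Computable l
  comp_r : Computable r
  mem_l : ∀ i, l i ∈ Set.Icc (0 : ℚ) 1
  mem_r : ∀ i, r i ∈ Set.Icc (0 : ℚ) 1
  le : ∀ i, l i ≤ r i
  summable : Summable (fun i => (r i : ℝ) - (l i : ℝ))

/-- A real `γ` is covered by a Solovay test if `γ ∈ [l i, r i]` for infinitely many `i`. -/
def SolovayTest.Covers (T : SolovayTest) (γ : ℝ) : Prop :=
  ∃ᶠ i in atTop, γ ∈ Set.Icc (T.l i : ℝ) (T.r i : ℝ)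

/-- The sequence of endpoints `l 0, r 0, l 1, r 1, …` of a Solovay test. -/
def SolovayTest.endpoints (T : SolovayTest) (n : ℕ) : ℚ :=
  if n % 2 = 0 then T.l (n / 2) else T.r (n / 2)

/-!
If `α` is irrational, every term of a left-c.e. approximation lies strictly below `α`, so for each
`s` one can search for a stage `f s ≥ s` at which `a` has caught up with `b s`. Then
`b s ≤ a (f s) ≤ α`, so `a (f s)` is at least as close to `α` as `b s` is, and the speed-up that `b`
offers over `a` is already a speed-up of `a` by itself: `a` is the required approximation.

The search needs the order of `ℚ` to be decidable on codes. `Rat.instDenumerable` numbers the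
rationals in increasing order of the pairing code `ratCode`, so numerator and denominator are
recovered by enumerating the decidable set of pairing codes.
-/

section Enumeration

theorem computable_count {p : ℕ → Prop} [DecidablePred p] (hp : ComputablePred p) :
    Computable (Nat.count p) := by
  have h_step : Computable₂ fun (_ : ℕ) (y : ℕ × ℕ) => y.2 + if p y.1 then 1 else 0 := by
    have h_indicator : Computable fun n => if p n then 1 else 0 :=
      ComputablePred.ite (Computable.const 1) (Computable.const 0) hp
    exact Primrec.nat_add.to_comp.comp (Computable.snd.comp Computable.snd)
      (h_indicator.comp (Computable.fst.comp Computable.snd))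
  refine (Computable.nat_rec Computable.id (Computable.const 0) h_step).of_eq fun n => ?_
  induction n with
  | zero => exact (Nat.count_zero p).symm
  | succ n ih => exact (congrArg (· + _) ih).trans (Nat.count_succ p n).symm

theorem computable_nth {p : ℕ → Prop} (hp : ComputablePred p) (hp_inf : (Set.ofPred p).Infinite) :
    Computable (Nat.nth p) := by
  classical
  have h_iff (n m : ℕ) : n < Nat.count p (m + 1) ↔ Nat.nth p n ≤ m := by
    rw [Nat.lt_nth_iff_count_lt hp_inf, Nat.lt_succ_iff]
  have h_exists (n : ℕ) : ∃ m, n < Nat.count p (m + 1) := ⟨_, (h_iff n _).2 le_rfl⟩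
  have h_lt : ComputablePred fun x : ℕ × ℕ => x.1 < Nat.count p (x.2 + 1) :=
    Computable.computablePred <| Primrec.nat_lt.decide.to_comp.comp Computable.fst
      ((computable_count hp).comp (Computable.succ.comp Computable.snd))
  refine (Computable.find h_lt h_exists).of_eq fun n => ?_
  simp only [h_iff, Nat.find_eq_iff, le_refl, not_le, imp_self, implies_true, and_self]

variable {α : Type*} [e : Encodable α] [Infinite α]

theorem encode_ofNat_ofEncodableOfInfinite (n : ℕ) :
    e.encode (@Denumerable.ofNat α (Denumerable.ofEncodableOfInfinite α) n) =
      Nat.nth (· ∈ Set.range e.encode) n := by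
  -- `Denumerable.ofEncodableOfInfinite` transports `Nat.Subtype.ofNat` along `equivRangeEncode`.
  let := Encodable.decidableRangeEncode α
  have h_inf : (Set.ofPred (· ∈ Set.range e.encode)).Infinite :=
    Set.infinite_range_of_injective e.encode_injective
  have : Infinite (Set.range e.encode) := h_inf.to_subtype
  calc e.encode (@Denumerable.ofNat α (Denumerable.ofEncodableOfInfinite α) n)
      = (Nat.Subtype.ofNat (Set.range e.encode) n : ℕ) :=
        congrArg Subtype.val ((Encodable.equivRangeEncode α).apply_symm_apply _)
    _ = Nat.nth (· ∈ Set.range e.encode) n := by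
        rw [Nat.nth_apply_eq_orderIsoOfNat h_inf]
        exact congrArg Subtype.val Nat.Subtype.orderIsoOfNat_apply.symm

theorem computable_encode_of_computablePred_range
    (h_range : ComputablePred (· ∈ Set.range e.encode)) :
    @Computable α ℕ (@Primcodable.ofDenumerable α (Denumerable.ofEncodableOfInfinite α)) _
      e.encode := by
  let := Denumerable.ofEncodableOfInfinite α
  have h_nth : Computable (Nat.nth (· ∈ Set.range e.encode)) :=
    computable_nth h_range (Set.infinite_range_of_injective e.encode_injective)
  refine (h_nth.comp Computable.encode).of_eq fun x => ?_
  rw [← encode_ofNat_ofEncodableOfInfinite, Denumerable.ofNat_encode]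

end Enumeration

section Integer

theorem primrec_int_cases {σ : Type*} [Primcodable σ] {f : ℤ → σ}
    (h_ofNat : Primrec fun n : ℕ => f n) (h_negSucc : Primrec fun n : ℕ => f (Int.negSucc n)) :
    Primrec f := by
  have h_even : PrimrecPred fun n : ℕ => n % 2 = 0 :=
    Primrec.eq.comp (Primrec.nat_mod.comp Primrec.id (Primrec.const 2)) (Primrec.const 0)
  have h_half : Primrec fun n : ℕ => n / 2 := Primrec.nat_div.comp Primrec.id (Primrec.const 2)
  refine ((Primrec.ite h_even (h_ofNat.comp h_half) (h_negSucc.comp h_half)).comp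
    Primrec.encode).of_eq fun z => ?_
  cases z with
  | ofNat n =>
    have h_code : Encodable.encode (Int.ofNat n) = 2 * n := rfl
    rw [h_code, if_pos (by lia), show 2 * n / 2 = n by lia, Int.ofNat_eq_natCast]
  | negSucc n =>
    have h_code : Encodable.encode (Int.negSucc n) = 2 * n + 1 := rfl
    rw [h_code, if_neg (by lia), show (2 * n + 1) / 2 = n by lia]

theorem primrec_int_toNat : Primrec Int.toNat :=
  primrec_int_cases Primrec.id (Primrec.const 0)

theorem primrec_int_toNat_neg : Primrec fun z : ℤ => (-z).toNat :=
  primrec_int_cases ((Primrec.const 0).of_eq fun n => by simp) Primrec.succ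

theorem primrec_int_natAbs : Primrec Int.natAbs :=
  (Primrec.nat_add.comp primrec_int_toNat primrec_int_toNat_neg).of_eq
    Int.toNat_add_toNat_neg_eq_natAbs

end Integer

section Rational

theorem coprime_iff_forall_lt {m n : ℕ} :
    m.Coprime n ↔ ∀ d < m + n + 1, m % d = 0 ∧ n % d = 0 → d = 1 := by
  constructor
  · rintro h_coprime d - ⟨hm, hn⟩
    exact Nat.eq_one_of_dvd_coprimes h_coprime (Nat.dvd_of_mod_eq_zero hm)
      (Nat.dvd_of_mod_eq_zero hn)
  · intro h
    have h_gcd_le : m.gcd n ≤ m + n := by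
      rcases Nat.eq_zero_or_pos m with rfl | hm
      · simp
      · exact (Nat.gcd_le_left n hm).trans (Nat.le_add_right m n)
    exact h _ (Nat.lt_succ_of_le h_gcd_le)
      ⟨Nat.mod_eq_zero_of_dvd (m.gcd_dvd_left n), Nat.mod_eq_zero_of_dvd (m.gcd_dvd_right n)⟩

theorem primrecRel_coprime : PrimrecRel Nat.Coprime := by
  -- `PrimrecRel.forall_lt` allows a single natural parameter, so `(m, n)` is passed as a code `x`.
  have h_dvd {f : ℕ → ℕ} (hf : Primrec f) : PrimrecRel fun d x => f x % d = 0 :=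
    Primrec.eq.comp (Primrec.nat_mod.comp (hf.comp Primrec.snd) Primrec.fst) (Primrec.const 0)
  have h_fst : Primrec fun x : ℕ => x.unpair.1 := Primrec.fst.comp Primrec.unpair
  have h_snd : Primrec fun x : ℕ => x.unpair.2 := Primrec.snd.comp Primrec.unpair
  have h_divisor : PrimrecRel fun d x : ℕ =>
      ¬(x.unpair.1 % d = 0 ∧ x.unpair.2 % d = 0) ∨ d = 1 :=
    ((h_dvd h_fst).and (h_dvd h_snd)).not.or (Primrec.eq.comp Primrec.fst (Primrec.const 1))
  have h_bound : Primrec fun x : ℕ × ℕ => x.1 + x.2 + 1 := Primrec.succ.comp Primrec.nat_add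
  refine (h_divisor.forall_lt.comp h_bound Primrec₂.natPair).of_eq fun x => ?_
  simp only [Nat.unpair_pair, coprime_iff_forall_lt, imp_iff_not_or]

/-- The code of a rational that underlies the enumeration `Rat.instDenumerable`: the pairing of the
codes of its numerator and denominator. Not every natural number is such a code. -/
def ratCode (q : ℚ) : ℕ := Nat.pair (Encodable.encode q.num) q.den

theorem mem_range_ratCode {n : ℕ} :
    n ∈ Set.range ratCode ↔
      0 < n.unpair.2 ∧ (Denumerable.ofNat ℤ n.unpair.1).natAbs.Coprime n.unpair.2 := by
  constructor
  · rintro ⟨q, rfl⟩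
    simpa only [ratCode, Nat.unpair_pair, Denumerable.ofNat_encode] using
      ⟨q.den_pos, q.reduced⟩
  · rintro ⟨h_pos, h_coprime⟩
    exact ⟨⟨_, _, h_pos.ne', h_coprime⟩, by
      simp only [ratCode, Denumerable.encode_ofNat, Nat.pair_unpair]⟩

theorem primrecPred_mem_range_ratCode : PrimrecPred (· ∈ Set.range ratCode) := by
  have h_num : Primrec fun n : ℕ => (Denumerable.ofNat ℤ n.unpair.1).natAbs :=
    primrec_int_natAbs.comp ((Primrec.ofNat ℤ).comp (Primrec.fst.comp Primrec.unpair))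
  have h_den : Primrec fun n : ℕ => n.unpair.2 := Primrec.snd.comp Primrec.unpair
  exact ((Primrec.nat_lt.comp (Primrec.const 0) h_den).and
    (primrecRel_coprime.comp h_num h_den)).of_eq fun _ => mem_range_ratCode.symm

theorem computable_ratCode : Computable ratCode :=
  computable_encode_of_computablePred_range (e := Rat.instEncodable)
    primrecPred_mem_range_ratCode.computablePred

theorem computable_rat_num : Computable Rat.num :=
  Computable.encode_iff.1 <|
    (Primrec.fst.comp Primrec.unpair).to_comp.comp computable_ratCode |>.of_eq fun q => by
      simp [ratCode]

theorem computable_rat_den : Computable Rat.den :=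
  (Primrec.snd.comp Primrec.unpair).to_comp.comp computable_ratCode |>.of_eq fun q => by
    simp [ratCode]

-- Negative parts are moved across the inequality, so that only arithmetic on `ℕ` is involved.
theorem rat_le_iff_toNat {q r : ℚ} :
    q ≤ r ↔ q.num.toNat * r.den + (-r.num).toNat * q.den ≤
      r.num.toNat * q.den + (-q.num).toNat * r.den := by
  have hq := Int.toNat_sub_toNat_neg q.num
  have hr := Int.toNat_sub_toNat_neg r.num
  have h_diff : r.num * q.den - q.num * r.den =
      ((r.num.toNat * q.den + (-q.num).toNat * r.den : ℕ) : ℤ) -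
        (q.num.toNat * r.den + (-r.num).toNat * q.den : ℕ) := by
    push_cast
    linear_combination q.den * -hr + r.den * hq
  rw [Rat.le_iff, ← sub_nonneg, h_diff, sub_nonneg, Nat.cast_le]

theorem computablePred_rat_le : ComputablePred fun x : ℚ × ℚ => x.1 ≤ x.2 := by
  have h_mul {f : ℤ → ℕ} (hf : Primrec f) {g h : ℚ × ℚ → ℚ} (hg : Computable g)
      (hh : Computable h) : Computable fun x => f (g x).num * (h x).den :=
    Primrec.nat_mul.to_comp.comp (hf.to_comp.comp (computable_rat_num.comp hg))
      (computable_rat_den.comp hh)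
  have h_sum {g h : ℚ × ℚ → ℚ} (hg : Computable g) (hh : Computable h) :
      Computable fun x => (g x).num.toNat * (h x).den + (-(h x).num).toNat * (g x).den :=
    Primrec.nat_add.to_comp.comp (h_mul primrec_int_toNat hg hh) (h_mul primrec_int_toNat_neg hh hg)
  exact (Computable.computablePred (Primrec.nat_le.decide.to_comp.comp
    (h_sum Computable.fst Computable.snd) (h_sum Computable.snd Computable.fst))).of_eq
      fun _ => rat_le_iff_toNat.symm

end Rational

section Speedability

theorem IsCompApprox.le_of_monotone {a : ℕ → ℚ} {α : ℝ} (ha : IsCompApprox a α)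
    (ha_mono : Monotone a) (s : ℕ) : (a s : ℝ) ≤ α :=
  (Rat.cast_mono.comp ha_mono).ge_of_tendsto ha.2.2 s

theorem exists_isComputableOrder_of_frequently {R : ℕ → ℕ → Prop}
    (hR : ComputablePred fun x : ℕ × ℕ => R x.1 x.2)
    (hR_anti : ∀ ⦃s s' t⦄, s ≤ s' → R s' t → R s t) (hR_freq : ∀ s, ∃ᶠ t in atTop, R s t) :
    ∃ f, IsComputableOrder f ∧ ∀ s, R s (f s) := by
  classical
  have h_exists (s : ℕ) : ∃ t, s ≤ t ∧ R s t := frequently_atTop.1 (hR_freq s) s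
  have h_find (s : ℕ) := Nat.find_spec (h_exists s)
  have h_search : ComputablePred fun x : ℕ × ℕ => x.1 ≤ x.2 ∧ R x.1 x.2 := by
    refine Computable.computablePred ?_
    exact (Primrec.and.to_comp.comp Primrec.nat_le.decide.to_comp hR.decide).of_eq fun x => by simp
  refine ⟨fun s => Nat.find (h_exists s), ⟨Computable.find h_search h_exists, ?_, ?_⟩,
    fun s => (h_find s).2⟩
  · exact fun s s' hs =>
      Nat.find_min' _ ⟨hs.trans (h_find s').1, hR_anti hs (h_find s').2⟩
  · exact tendsto_atTop_mono (fun s => (h_find s).1) tendsto_id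

theorem speedLiminf_le_liminf {a b : ℕ → ℚ} {f : ℕ → ℕ} {α : ℝ} (ha_le : ∀ s, (a s : ℝ) ≤ α)
    (hba : ∀ s, b s ≤ a (f s)) :
    speedLiminf a f α ≤
      liminf (fun s => ((|(α - (b s : ℝ)) / (α - (a s : ℝ))| : ℝ) : EReal)) atTop := by
  refine liminf_le_liminf (Eventually.of_forall fun s => EReal.coe_le_coe_iff.2 ?_)
  have hba_real : (b s : ℝ) ≤ a (f s) := Rat.cast_le.2 (hba s)
  have h_dist : |α - a (f s)| ≤ |α - b s| :=
    abs_le_abs_of_nonneg (sub_nonneg.2 (ha_le (f s))) (sub_le_sub_left hba_real α)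
  rw [abs_div, abs_div]
  gcongr

theorem weakly_lce_speedable_implies_lce_speedable_general {a b : ℕ → ℚ} {α : ℝ} {ρ : ℚ}
    (ha : Computable a) (ha_tendsto : Tendsto (fun s => (a s : ℝ)) atTop (nhds α))
    (ha_le : ∀ s, (a s : ℝ) ≤ α) (hb : Computable b) (hb_mono : Monotone b)
    (hb_le : ∀ s, (b s : ℝ) ≤ α)
    (hlim : liminf (fun s => ((|(α - (b s : ℝ)) / (α - (a s : ℝ))| : ℝ) : EReal)) atTop ≤
      ((ρ : ℝ) : EReal)) :
    IsRhoSpeedable a α ρ := by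
  by_cases h_rat : ∃ q : ℚ, α = q
  · exact Or.inl h_rat
  have hb_lt (s : ℕ) : (b s : ℝ) < α := (hb_le s).lt_of_ne fun h => h_rat ⟨b s, h.symm⟩
  have h_catch_up (s : ℕ) : ∃ᶠ t in atTop, b s ≤ a t :=
    ((ha_tendsto.eventually_const_lt (hb_lt s)).mono fun t ht => Rat.cast_le.1 ht.le).frequently
  have h_le : ComputablePred fun x : ℕ × ℕ => b x.1 ≤ a x.2 :=
    (computablePred_rat_le.decide.comp
      ((hb.comp Computable.fst).pair (ha.comp Computable.snd))).computablePred
  obtain ⟨f, hf, hba⟩ := exists_isComputableOrder_of_frequently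
    (R := fun s t => b s ≤ a t) h_le (fun _ _ _ hs h => (hb_mono hs).trans h) h_catch_up
  exact Or.inr ⟨f, hf, (speedLiminf_le_liminf ha_le hba).trans hlim⟩

end Speedability

theorem weakly_lce_speedable_implies_lce_speedable (α : ℝ) (hα : α ∈ Set.Ioo (0 : ℝ) 1)
    (ρ : ℚ) (hρ0 : 0 < ρ) (hρ1 : ρ < 1)
    (a b : ℕ → ℚ)
    (ha : IsCompApprox a α) (hamono : Monotone a)
    (hb : IsCompApprox b α) (hbmono : Monotone b)
    (hlim : Filter.liminf
        (fun s => ((|(α - (b s : ℝ)) / (α - (a s : ℝ))| : ℝ) : EReal)) atTop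
        ≤ (((ρ : ℝ) : EReal))) :
    ∃ c : ℕ → ℚ, IsCompApprox c α ∧ Monotone c ∧ IsRhoSpeedable c α ρ := by
  exact ⟨a, ha, hamono, weakly_lce_speedable_implies_lce_speedable_general ha.1 ha.2.2
    (ha.le_of_monotone hamono) hb.1 hbmono (hb.le_of_monotone hbmono) hlim⟩
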